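/- Let p, q > 1, α < 1, β < 1 and 0 ≤ s ≤ 1. Then ∫_0^1 [(p/q) ∫_{s·x}^1 (1-u^p)^{1/q-1} u^{p-2} du] · x^{-α} (1-x^p)^{-β} dx = (1/(pq)) B((p-1)/p, 1/q) B((1-α)/p, 1-β) − (s^{p-1}/(q(p-1))) B(1-α/p, 1-β) · ∑_{k=0}^∞ [(1-1/q)_k (1-α/p)_k ((p-1)/p)_k / ((2-α/p-β)_k ((2p-1)/p)_k · k!)] s^{pk}. (That is, ∫_0^1 arccos_{p,q}(sx) x^{-α}(1-x^p)^{-β} dx = (1/(pq)) B((p-1)/p,1/q) B((1-α)/p,1-β) − (s^{p-1}/(q(p-1))) B(1-α/p,1-β) ₃F₂(1-1/q, 1-α/p, (p-1)/p; 2-α/p-β, (2p-1)/p; s^p).) -/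

import Mathlib

open MeasureTheory

/-- Ascending Pochhammer symbol `(a)_k = a (a+1) ⋯ (a+k-1)`. -/
noncomputable def poch (a : ℝ) (k : ℕ) : ℝ := ∏ i ∈ Finset.range k, (a + i)

/-- Euler's beta function `B(a,b) = Γ(a)Γ(b)/Γ(a+b)`. -/
noncomputable def betaR (a b : ℝ) : ℝ := Real.Gamma a * Real.Gamma b / Real.Gamma (a + b)

open Set in
lemma beta_aux (a b : ℝ) (ha : 0 < a) (hb : 0 < b) :
    Integrable (Set.indicator (Ioo (0:ℝ) 1) (fun t : ℝ => t ^ (a-1) * (1-t)^(b-1))) ∧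
    ∫ t, (Set.indicator (Ioo (0:ℝ) 1) (fun t : ℝ => t ^ (a-1) * (1-t)^(b-1))) t = betaR a b := by
  have hB : 0 < betaR a b := ProbabilityTheory.beta_pos ha hb
  have h1 := ProbabilityTheory.lintegral_betaPDF_eq_one ha hb
  have h0 : ∀ x, 0 ≤ ProbabilityTheory.betaPDFReal a b x := by
    intro x
    by_cases h : 0 < x ∧ x < 1
    · exact (ProbabilityTheory.betaPDFReal_pos h.1 h.2 ha hb).le
    · simp [ProbabilityTheory.betaPDFReal, h]
  have hm := ProbabilityTheory.measurable_betaPDFReal a b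
  have hI : Integrable (ProbabilityTheory.betaPDFReal a b) := by
    refine (lintegral_ofReal_ne_top_iff_integrable hm.aestronglyMeasurable
      (Filter.Eventually.of_forall h0)).1 ?_
    have : (∫⁻ x, ENNReal.ofReal (ProbabilityTheory.betaPDFReal a b x)) = 1 := h1
    rw [this]; simp
  have hv : ∫ x, ProbabilityTheory.betaPDFReal a b x = 1 := by
    rw [integral_eq_lintegral_of_nonneg_ae (Filter.Eventually.of_forall h0) hm.aestronglyMeasurable]
    have : (∫⁻ x, ENNReal.ofReal (ProbabilityTheory.betaPDFReal a b x)) = 1 := h1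
    rw [this]; simp
  have he : (Set.indicator (Ioo (0:ℝ) 1) (fun t : ℝ => t ^ (a-1) * (1-t)^(b-1)))
      = fun x => betaR a b * ProbabilityTheory.betaPDFReal a b x := by
    funext x
    have hb' : ProbabilityTheory.beta a b = betaR a b := rfl
    simp only [Set.indicator, ProbabilityTheory.betaPDFReal, hb', mem_Ioo]
    split_ifs
    · field_simp
    · simp
  rw [he]
  refine ⟨hI.const_mul _, ?_⟩
  rw [integral_const_mul, hv, mul_one]

open Set in
lemma beta_p (p a b : ℝ) (hp : 0 < p) (ha : 0 < a) (hb : 0 < b) :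
    IntervalIntegrable (fun u : ℝ => u ^ (a-1) * (1-u^p)^(b-1)) volume 0 1 ∧
    ∫ u in (0:ℝ)..1, u ^ (a-1) * (1-u^p)^(b-1) = 1 / p * betaR (a/p) b := by
  obtain ⟨h1, h2⟩ := beta_aux (a/p) b (by positivity) hb
  set g := (Set.indicator (Ioo (0:ℝ) 1) (fun t : ℝ => t ^ (a/p-1) * (1-t)^(b-1))) with hg
  have h3 : IntegrableOn g (Ioi 0) := h1.integrableOn
  have h4 : ∫ t in Ioi 0, g t = betaR (a/p) b := by
    rw [← h2]
    apply setIntegral_eq_integral_of_forall_compl_eq_zero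
    intro x hx
    simp only [hg]
    apply indicator_of_notMem
    intro h; exact hx h.1
  have h5 := (integrableOn_Ioi_comp_rpow_iff' g hp.ne').2 h3
  have h6 := integral_comp_rpow_Ioi_of_pos (g := g) hp
  have he : ∀ x ∈ Ioi (0:ℝ), x ^ (p-1) • g (x ^ p) =
      indicator (Ioo (0:ℝ) 1) (fun u : ℝ => u ^ (a-1) * (1-u^p)^(b-1)) x := by
    intro x hx
    have hx' : 0 < x := hx
    by_cases h : x < 1
    · have : x ^ p < 1 := Real.rpow_lt_one hx'.le h hp
      have h0 : 0 < x ^ p := Real.rpow_pos_of_pos hx' _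
      rw [hg, indicator_of_mem (show x ^ p ∈ Ioo (0:ℝ) 1 from ⟨h0, this⟩),
        indicator_of_mem (show x ∈ Ioo (0:ℝ) 1 from ⟨hx', h⟩), smul_eq_mul,
        ← mul_assoc, ← Real.rpow_mul hx'.le, ← Real.rpow_add hx']
      congr 2
      field_simp
      ring
    · have : 1 ≤ x ^ p := Real.one_le_rpow (not_lt.1 h) hp.le
      rw [hg, indicator_of_notMem (by simp [this]), indicator_of_notMem (by simp [not_lt.1 h])]
      simp
  have hII : Ioo (0:ℝ) 1 ∩ Ioi 0 = Ioo 0 1 := inter_eq_left.2 (fun x h => h.1)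
  have hII' : Ioi (0:ℝ) ∩ Ioo (0:ℝ) 1 = Ioo 0 1 := inter_eq_right.2 (fun x h => h.1)
  constructor
  · rw [intervalIntegrable_iff_integrableOn_Ioo_of_le zero_le_one]
    have h7 := (integrableOn_congr_fun he measurableSet_Ioi).1 h5
    rw [IntegrableOn, integrable_indicator_iff measurableSet_Ioo, IntegrableOn,
      Measure.restrict_restrict measurableSet_Ioo, hII] at h7
    exact h7
  · rw [intervalIntegral.integral_of_le zero_le_one, integral_Ioc_eq_integral_Ioo]
    have h8 : ∫ x in Ioi 0, (p * x ^ (p - 1)) • g (x ^ p) =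
        p * ∫ x in Ioo (0:ℝ) 1, x ^ (a-1) * (1-x^p)^(b-1) := by
      rw [← integral_const_mul]
      rw [← hII', ← setIntegral_indicator measurableSet_Ioo]
      apply setIntegral_congr_fun measurableSet_Ioi
      intro x hx
      have := he x hx
      simp only [smul_eq_mul] at this ⊢
      rw [mul_assoc, this]
      by_cases h : x ∈ Ioo (0:ℝ) 1 <;> simp [h]
    rw [h6, h4] at h8
    rw [h8]; field_simp

lemma poch_succ (a : ℝ) (k : ℕ) : poch a (k+1) = poch a k * (a + k) := by
  simp [poch, Finset.prod_range_succ]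

lemma poch_pos {a : ℝ} (ha : 0 < a) (k : ℕ) : 0 < poch a k :=
  Finset.prod_pos fun i _ => by positivity

lemma poch_asc (a : ℝ) (k : ℕ) : poch a k = (ascPochhammer ℝ k).eval a := by
  induction k with
  | zero => simp [poch]
  | succ k ih => rw [poch_succ, ascPochhammer_succ_eval, ih]

lemma binom_hasSum (a z : ℝ) (hz : |z| < 1) :
    HasSum (fun k : ℕ => poch a k / (k.factorial : ℝ) * z ^ k) ((1 - z) ^ (-a)) := by
  have h := (Real.one_div_one_sub_rpow_hasFPowerSeriesOnBall_zero a).hasSum (y := z)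
    (by simpa [enorm_eq_nnnorm, ← NNReal.coe_lt_coe] using hz)
  have h1 : (0:ℝ) ≤ 1 - z := by have := (abs_lt.1 hz).2; linarith
  simp only [zero_add, one_div] at h
  rw [Real.rpow_neg h1]
  convert! h using 2 with k
  rw [FormalMultilinearSeries.ofScalars_apply_eq, ← Ring.multichoose_eq, smul_eq_mul]
  congr 1
  have := Ring.factorial_nsmul_multichoose_eq_ascPochhammer a k
  rw [Polynomial.ascPochhammer_smeval_eq_eval, ← poch_asc] at this
  rw [← this]
  have : (k.factorial : ℝ) ≠ 0 := by positivity
  simp only [nsmul_eq_mul]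
  field_simp

lemma Gamma_poch (a : ℝ) (ha : 0 < a) (k : ℕ) :
    Real.Gamma (a + k) = poch a k * Real.Gamma a := by
  induction k with
  | zero => simp [poch]
  | succ k ih =>
    rw [poch_succ]; push_cast
    rw [← add_assoc, Real.Gamma_add_one (by positivity), ih]; ring

lemma beta_shift (a b : ℝ) (ha : 0 < a) (hb : 0 < b) (k : ℕ) :
    betaR (a + k) b = betaR a b * (poch a k / poch (a + b) k) := by
  unfold betaR
  have h : a + k + b = a + b + k := by ring
  rw [h, Gamma_poch a ha, Gamma_poch (a+b) (by positivity)]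
  have := poch_pos (show 0 < a + b by positivity) k
  have := Real.Gamma_pos_of_pos (show 0 < a + b by positivity)
  field_simp

lemma poch_ratio (a : ℝ) (ha : 0 < a) (k : ℕ) :
    poch a k / poch (a + 1) k = a / (a + k) := by
  induction k with
  | zero => simp [poch, ha.ne']
  | succ k ih =>
    rw [poch_succ, poch_succ, mul_div_mul_comm, ih]
    push_cast
    have : a + k ≠ 0 := by positivity
    have : a + 1 + k ≠ 0 := by positivity
    have : a + (k + 1) ≠ 0 := by positivity
    field_simp
    ring

open Set in
/-- termwise integration for nonnegative terms -/
lemma hasSum_int (F : ℕ → ℝ → ℝ) (f : ℝ → ℝ) (y : ℝ) (hy : 0 ≤ y)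
    (hm : ∀ n, Measurable (F n)) (h0 : ∀ n, ∀ x ∈ Ioo 0 y, 0 ≤ F n x)
    (hf : IntervalIntegrable f volume 0 y)
    (hs : ∀ x ∈ Ioo 0 y, HasSum (fun n => F n x) (f x)) :
    HasSum (fun n => ∫ x in (0:ℝ)..y, F n x) (∫ x in (0:ℝ)..y, f x) := by
  simp only [intervalIntegral.integral_of_le hy, integral_Ioc_eq_integral_Ioo]
  rw [intervalIntegrable_iff_integrableOn_Ioo_of_le hy] at hf
  apply hasSum_integral_of_dominated_convergence F
  · exact fun n => (hm n).aestronglyMeasurable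
  · intro n
    filter_upwards [ae_restrict_mem measurableSet_Ioo] with x hx
    rw [Real.norm_of_nonneg (h0 n x hx)]
  · filter_upwards [ae_restrict_mem measurableSet_Ioo] with x hx using (hs x hx).summable
  · refine hf.congr ?_
    filter_upwards [ae_restrict_mem measurableSet_Ioo] with x hx using (hs x hx).tsum_eq.symm
  · filter_upwards [ae_restrict_mem measurableSet_Ioo] with x hx using hs x hx

open Set in
lemma inner_hasSum (p c y : ℝ) (hp : 1 < p) (hc0 : 0 < c) (hc1 : c < 1) (hy0 : 0 ≤ y)
    (hy1 : y ≤ 1) :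
    HasSum (fun k : ℕ => poch c k / (k.factorial : ℝ) *
      (y ^ (p * k + p - 1) / (p * k + p - 1)))
      (∫ u in (0:ℝ)..y, (1 - u ^ p) ^ (-c) * u ^ (p - 2)) := by
  have key := hasSum_int (fun k u => poch c k / (k.factorial : ℝ) * u ^ (p * k + p - 2))
    (fun u => (1 - u ^ p) ^ (-c) * u ^ (p - 2)) y hy0 (fun n => by fun_prop)
    (fun n x hx => by
      have := poch_pos hc0 n
      have := hx.1
      positivity) ?_ ?_
  · convert key using 2 with k
    have hk : (0:ℝ) ≤ p * k := by positivity
    rw [intervalIntegral.integral_const_mul, integral_rpow (Or.inl (by linarith))]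
    have e : p * k + p - 2 + 1 = p * k + p - 1 := by ring
    rw [e, Real.zero_rpow (by linarith), sub_zero]
  · have h := (beta_p p (p-1) (1-c) (by linarith) (by linarith) (by linarith)).1
    have h' := h.mono_set (c := 0) (d := y) (by
      rw [uIcc_of_le hy0, uIcc_of_le zero_le_one]; exact Icc_subset_Icc_right hy1)
    refine h'.congr ?_
    intro u _
    simp only
    rw [mul_comm]
    congr 2 <;> ring
  · intro x hx
    have hx1 : x < 1 := hx.2.trans_le hy1
    have hxp : x ^ p < 1 := Real.rpow_lt_one hx.1.le hx1 (by linarith)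
    have hxp0 : 0 < x ^ p := Real.rpow_pos_of_pos hx.1 _
    have h := (binom_hasSum c (x^p) (by rwa [abs_of_pos hxp0])).mul_right (x ^ (p-2))
    convert! h using 2 with k
    rw [mul_assoc, ← Real.rpow_natCast, ← Real.rpow_mul hx.1.le, ← Real.rpow_add hx.1]
    congr 2
    ring

open Set in
theorem arccos_pq_integral (p q α β s : ℝ) (hp : 1 < p) (hq : 1 < q)
    (hα : α < 1) (hβ : β < 1) (hs : s ∈ Set.Icc (0:ℝ) 1) :
    (∫ x in (0:ℝ)..1,
        ((p / q) * ∫ u in (s * x)..1, (1 - u ^ p) ^ (1 / q - 1) * u ^ (p - 2)) *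
          x ^ (-α) * (1 - x ^ p) ^ (-β)) =
      (1 / (p * q)) * betaR ((p - 1) / p) (1 / q) * betaR ((1 - α) / p) (1 - β) -
      (s ^ (p - 1) / (q * (p - 1))) * betaR (1 - α / p) (1 - β) *
        ∑' k : ℕ, poch (1 - 1 / q) k * poch (1 - α / p) k * poch ((p - 1) / p) k /
          (poch (2 - α / p - β) k * poch ((2 * p - 1) / p) k * (Nat.factorial k : ℝ)) *
            s ^ (p * (k : ℝ)) := by
  obtain ⟨hs0, hs1⟩ := hs
  have hp0 : 0 < p := by linarith
  have hq0 : 0 < q := by linarith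
  have hq1 : 1 / q < 1 := by rw [div_lt_one hq0]; exact hq
  have hq2 : 0 < 1 / q := by positivity
  have hsx : ∀ x ∈ Icc (0:ℝ) 1, s * x ∈ Icc (0:ℝ) 1 := fun x hx =>
    ⟨mul_nonneg hs0 hx.1, mul_le_one₀ hs1 hx.1 hx.2⟩
  set φ : ℝ → ℝ := fun u => (1 - u ^ p) ^ (1 / q - 1) * u ^ (p - 2) with hφ
  set W : ℝ → ℝ := fun x => x ^ (-α) * (1 - x ^ p) ^ (-β) with hW
  -- facts on φ
  obtain ⟨hφi, hφv⟩ : IntervalIntegrable φ volume 0 1 ∧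
      ∫ u in (0:ℝ)..1, φ u = 1 / p * betaR ((p-1)/p) (1/q) := by
    have h := beta_p p (p-1) (1/q) hp0 (by linarith) hq2
    have e : (fun u : ℝ => u ^ (p-1-1) * (1-u^p)^(1/q-1)) = φ := by
      funext u
      rw [hφ, mul_comm, show p - 1 - 1 = p - 2 by ring]
    rwa [e] at h
  have hWg : ∀ r : ℝ, 0 < 1 - α + r →
      IntervalIntegrable (fun x : ℝ => x ^ r * x ^ (-α) * (1 - x ^ p) ^ (-β)) volume 0 1 ∧
      ∫ x in (0:ℝ)..1, x ^ r * x ^ (-α) * (1 - x ^ p) ^ (-β)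
        = 1 / p * betaR ((1 - α + r)/p) (1-β) := by
    intro r hr
    obtain ⟨h1, h2⟩ := beta_p p (1 - α + r) (1-β) hp0 hr (by linarith)
    have e : ∀ x ∈ Ioc (0:ℝ) 1, x ^ (1-α+r-1) * (1-x^p)^(1-β-1) =
        x ^ r * x ^ (-α) * (1 - x ^ p) ^ (-β) := by
      intro x hx
      rw [← Real.rpow_add hx.1]
      congr 2 <;> ring
    constructor
    · refine h1.congr ?_
      rw [uIoc_of_le zero_le_one]
      exact e
    · rw [← h2]
      apply intervalIntegral.integral_congr_ae
      rw [uIoc_of_le zero_le_one]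
      exact Filter.Eventually.of_forall fun x hx => (e x hx).symm
  have hW0 := hWg 0 (by linarith)
  simp only [Real.rpow_zero, one_mul, add_zero] at hW0
  obtain ⟨hWi, hWv⟩ := hW0
  set I : ℝ → ℝ := fun y => ∫ u in (0:ℝ)..y, φ u with hI
  have hφs : ∀ y ∈ Icc (0:ℝ) 1, ∫ u in y..1, φ u = (∫ u in (0:ℝ)..1, φ u) - I y := by
    intro y hy
    rw [hI]
    have a1 : IntervalIntegrable φ volume 0 y := hφi.mono_set (by
      rw [uIcc_of_le hy.1, uIcc_of_le zero_le_one]; exact Icc_subset_Icc_right hy.2)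
    exact (intervalIntegral.integral_interval_sub_left hφi a1).symm
  have hIc : ContinuousOn I (Icc 0 1) := by
    have := intervalIntegral.continuousOn_primitive_interval (a := 0) (b := 1) (μ := volume)
      (f := φ) (by
        rw [uIcc_of_le zero_le_one]
        exact (intervalIntegrable_iff_integrableOn_Icc_of_le zero_le_one).1 hφi)
    rwa [uIcc_of_le zero_le_one] at this
  have hIWi : IntervalIntegrable (fun x => I (s * x) * W x) volume 0 1 := by
    apply IntervalIntegrable.continuousOn_mul hWi
    rw [uIcc_of_le zero_le_one]
    exact hIc.comp (by fun_prop) hsx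
  -- series
  have hser := hasSum_int (fun (k : ℕ) x => poch (1-1/q) k / (k.factorial : ℝ) *
      ((s*x) ^ (p * k + p - 1) / (p * k + p - 1)) * W x) (fun x => I (s * x) * W x) 1 zero_le_one
      (fun n => by fun_prop) (fun n x hx => by
        have h1 := poch_pos (show 0 < 1 - 1/q by linarith) n
        have h2 : (0:ℝ) ≤ p * n := by positivity
        have h3 : 0 ≤ p * n + p - 1 := by linarith
        have h4 : 0 ≤ s * x := (hsx x ⟨hx.1.le, hx.2.le⟩).1
        have h5 : 0 ≤ 1 - x ^ p := by
          have := Real.rpow_lt_one hx.1.le hx.2 hp0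
          linarith
        have h6 := hx.1
        simp only [hW]
        positivity) hIWi (fun x hx => by
        have hh := hsx x ⟨hx.1.le, hx.2.le⟩
        have := (inner_hasSum p (1 - 1/q) (s*x) hp (by linarith) (by linarith) hh.1 hh.2).mul_right
          (W x)
        simpa only [hI, hφ, neg_sub] using this)
  have hterm : ∀ k : ℕ, (∫ x in (0:ℝ)..1, poch (1-1/q) k / (k.factorial : ℝ) *
      ((s*x) ^ (p * k + p - 1) / (p * k + p - 1)) * W x) =
      (s ^ (p - 1) / (p * (p - 1))) * betaR (1 - α / p) (1 - β) *
       (poch (1 - 1 / q) k * poch (1 - α / p) k * poch ((p - 1) / p) k /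
          (poch (2 - α / p - β) k * poch ((2 * p - 1) / p) k * (Nat.factorial k : ℝ)) *
            s ^ (p * (k : ℝ))) := by
    intro k
    have h2 : (0:ℝ) ≤ p * k := by positivity
    have h3 : 0 < p * k + p - 1 := by linarith
    have e1 : (∫ x in (0:ℝ)..1, poch (1-1/q) k / (k.factorial : ℝ) *
      ((s*x) ^ (p * k + p - 1) / (p * k + p - 1)) * W x) =
      ∫ x in (0:ℝ)..1, (poch (1-1/q) k / (k.factorial : ℝ) * s ^ (p * k + p - 1)
        / (p * k + p - 1)) * (x ^ (p * k + p - 1) * x ^ (-α) * (1 - x ^ p) ^ (-β)) := by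
      apply intervalIntegral.integral_congr
      intro x hx
      rw [uIcc_of_le zero_le_one] at hx
      simp only [hW]
      rw [Real.mul_rpow hs0 hx.1]
      ring
    rw [e1, intervalIntegral.integral_const_mul, (hWg _ (by linarith)).2]
    have hap : 0 < 1 - α / p := by
      rw [sub_pos, div_lt_one hp0]; linarith
    have e2 : (1 - α + (p * k + p - 1)) / p = (1 - α / p) + k := by field_simp; ring
    have e3 : s ^ (p * k + p - 1) = s ^ (p - 1) * s ^ (p * k) := by
      rw [← Real.rpow_add_of_nonneg hs0 (by linarith) h2]; congr 1; ring
    rw [e2, e3, beta_shift _ _ hap (by linarith),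
      show 1 - α / p + (1 - β) = 2 - α / p - β by ring]
    have e4 := poch_ratio ((p-1)/p) (div_pos (by linarith) hp0) k
    rw [show (p-1)/p + 1 = (2*p-1)/p by field_simp; ring] at e4
    have e5 : (p-1)/p / ((p-1)/p + k) = (p-1) / (p * k + p - 1) := by
      have : (p-1)/p + k = (p * k + p - 1) / p := by field_simp; ring
      rw [this]; field_simp
    rw [e5] at e4
    have e6 : poch (1 - 1 / q) k * poch (1 - α / p) k * poch ((p - 1) / p) k /
          (poch (2 - α / p - β) k * poch ((2 * p - 1) / p) k * (Nat.factorial k : ℝ)) =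
        poch (1 - 1 / q) k / (Nat.factorial k : ℝ) * (poch (1 - α / p) k / poch (2 - α / p - β) k)
        * (poch ((p - 1) / p) k / poch ((2 * p - 1) / p) k) := by
      simp only [div_eq_mul_inv, mul_inv]; ring
    rw [e6, e4]
    have : p - 1 ≠ 0 := by linarith
    have := h3.ne'
    generalize poch (1 - α / p) k / poch (2 - α / p - β) k = R
    generalize poch (1 - 1 / q) k / (Nat.factorial k : ℝ) = S
    field_simp
  simp only [hterm] at hser
  have hfin := hser.tsum_eq
  rw [tsum_mul_left] at hfin
  have e0 : (∫ x in (0:ℝ)..1, ((p / q) * ∫ u in (s * x)..1, φ u) *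
          x ^ (-α) * (1 - x ^ p) ^ (-β)) =
      ∫ x in (0:ℝ)..1, ((p / q * ∫ u in (0:ℝ)..1, φ u) * W x - p / q * (I (s * x) * W x)) := by
    apply intervalIntegral.integral_congr
    intro x hx
    rw [uIcc_of_le zero_le_one] at hx
    simp only [hW]
    rw [hφs _ (hsx x hx)]
    ring
  rw [e0, intervalIntegral.integral_sub (hWi.const_mul _) (hIWi.const_mul _),
    intervalIntegral.integral_const_mul, intervalIntegral.integral_const_mul, ← hfin, hφv, hWv]
  have : p - 1 ≠ 0 := by linarith
  field_simp
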